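/- There exists a universal constant c with the following property. Let P be a reversible Markov chain on a finite state space X with uniform stationary distribution π, started from an initial distribution μ satisfying μ(x) ≥ π(x)/2 for all x, and suppose the maximal hitting time satisfies H ≤ c₁|X| for a constant c₁ ≥ 1. Let θ ≥ 2 and let S_t denote the set of states not visited by the chain up to time t. Then for all a, b > 0 and all t ≥ t′ = C₁|X|·T_rel·log θ + C₂|X|·log|X|, where C₁ = 2c·c₁²·(1+a) and C₂ = c·c₁²·(1+b), one has E[θ^{|S_t|}] ≤ 1 + δ + δ² + δ⁹, where δ = θ^{−(1+2a)T_rel}·|X|^{−b}. In particular, when a = b = 1, E[θ^{|S_t|}] < 1.21. -/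

import Mathlib

open Finset
open scoped Classical

namespace Paper

variable {X : Type} [Fintype X] [DecidableEq X]

/-- `P` is a stochastic matrix. -/
def IsStoch (P : Matrix X X ℝ) : Prop :=
  (∀ x y, 0 ≤ P x y) ∧ ∀ x, ∑ y, P x y = 1

/-- The uniform distribution is stationary for `P` (all columns sum to 1). -/
def UnifStationary (P : Matrix X X ℝ) : Prop := ∀ y, ∑ x, P x y = 1

/-- Irreducibility of the chain. -/
def Irred (P : Matrix X X ℝ) : Prop := ∀ x y, ∃ n, 0 < (P ^ n) x y

/-- Probability of a trajectory `ω 0, ω 1, …, ω n` under initial distribution `μ`. -/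
noncomputable def pathProb (P : Matrix X X ℝ) (μ : X → ℝ) {n : ℕ}
    (ω : Fin (n + 1) → X) : ℝ :=
  μ (ω 0) * ∏ i : Fin n, P (ω i.castSucc) (ω i.succ)

/-- Probability of an event determined by the trajectory up to time `n`. -/
noncomputable def prPath (P : Matrix X X ℝ) (μ : X → ℝ) (n : ℕ)
    (E : (Fin (n + 1) → X) → Prop) : ℝ :=
  ∑ ω : Fin (n + 1) → X, if E ω then pathProb P μ ω else 0

/-- Expectation of a functional of the trajectory up to time `n`. -/
noncomputable def expPath (P : Matrix X X ℝ) (μ : X → ℝ) (n : ℕ)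
    (f : (Fin (n + 1) → X) → ℝ) : ℝ :=
  ∑ ω : Fin (n + 1) → X, pathProb P μ ω * f ω

/-- Point mass at `x`. -/
def delta (x : X) : X → ℝ := fun z => if z = x then 1 else 0

/-- Expected hitting time `E_x[T_y]`, via `E[T] = ∑_{n ≥ 0} Pr(T > n)`. -/
noncomputable def hitExp (P : Matrix X X ℝ) (x y : X) : ℝ :=
  (∑' n : ℕ, ENNReal.ofReal (prPath P (delta x) n (fun ω => ∀ i, ω i ≠ y))).toReal

/-- Maximal expected hitting time `H = max_{x,y} E_x[T_y]`. -/
noncomputable def maxHit (P : Matrix X X ℝ) : ℝ := ⨆ x, ⨆ y, hitExp P x y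

/-- Relaxation time: `max 1/(1-|λ|)` over nontrivial eigenvalues `λ` of `P`. -/
noncomputable def Trel (P : Matrix X X ℝ) : ℝ :=
  sSup ((fun l : ℝ => 1 / (1 - |l|)) '' (spectrum ℝ P \ {1}))

/-- The set of states not visited by the trajectory `ω` (up to its time horizon). -/
noncomputable def unvisited {n : ℕ} (ω : Fin (n + 1) → X) : Finset X :=
  Finset.univ.filter fun x => ∀ i, ω i ≠ x

/-- `Pr_x(T⁺_x ≥ s)`: the chain started at `x` does not return to `x`
at any time `i` with `1 ≤ i < s`. -/
noncomputable def prReturnGE (P : Matrix X X ℝ) (x : X) (s : ℝ) : ℝ :=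
  prPath P (delta x) ⌈s⌉₊
    (fun ω => ∀ i : Fin (⌈s⌉₊ + 1), 1 ≤ (i : ℕ) → ((i : ℕ) : ℝ) < s → ω i ≠ x)

/-- Separation distance at time `n` from state `x`. -/
noncomputable def sep (P : Matrix X X ℝ) (pi : X → ℝ) (x : X) (n : ℕ) : ℝ :=
  ⨆ y, (1 - (P ^ n) x y / pi y)

/-- Relative entropy `D(μ ‖ pi)` (with `0 log 0 = 0`). -/
noncomputable def relEnt (μ pi : X → ℝ) : ℝ := ∑ x, μ x * Real.log (μ x / pi x)

/-- Total variation distance `d_tv(μ, pi) = ∑_{y : μ y < pi y} (pi y - μ y)`. -/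
noncomputable def dtv (μ pi : X → ℝ) : ℝ :=
  ∑ y ∈ Finset.univ.filter (fun y => μ y < pi y), (pi y - μ y)

/-- Entropy decay (mixing) time. -/
noncomputable def tauEnt (P : Matrix X X ℝ) (pi : X → ℝ) (ε : ℝ) : ℕ :=
  sInf {n' | ∀ n ≥ n', ∀ x, relEnt ((P ^ n) x) pi ≤ ε}

/-- Separation mixing time. -/
noncomputable def tauSep (P : Matrix X X ℝ) (pi : X → ℝ) (ε : ℝ) : ℕ :=
  sInf {n' | ∀ n ≥ n', ∀ x, sep P pi x n ≤ ε}

/-- Total variation mixing time. -/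
noncomputable def tauTV (P : Matrix X X ℝ) (pi : X → ℝ) (ε : ℝ) : ℕ :=
  sInf {n' | ∀ n ≥ n', ∀ x, dtv ((P ^ n) x) pi ≤ ε}

/-- `L²(pi)` distance of `Pᵗ(x,·)` from `pi`. -/
noncomputable def chiDist (P : Matrix X X ℝ) (pi : X → ℝ) (t : ℕ) (x : X) : ℝ :=
  Real.sqrt (∑ y, ((P ^ t) x y / pi y - 1) ^ 2 * pi y)

/-- `L²` mixing time. -/
noncomputable def tau2 (P : Matrix X X ℝ) (pi : X → ℝ) : ℕ :=
  sInf {t | ∀ x, chiDist P pi t x ≤ 1 / 4}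

/-- Uniform distribution on a finite type. -/
noncomputable def unif (Y : Type) [Fintype Y] : Y → ℝ := fun _ => (Fintype.card Y : ℝ)⁻¹

/-- The `m`-state lamplighter chain over a base chain `Pb`:
the lamp at the current position is randomized, the lamplighter moves one step
of the base chain, and the lamp at the new position is randomized. -/
noncomputable def lampChain {V : Type} [Fintype V] [DecidableEq V]
    (Pb : Matrix V V ℝ) (m : ℕ) :
    Matrix ((V → Fin m) × V) ((V → Fin m) × V) ℝ :=
  fun p q =>
    if ∀ z, z ≠ p.2 → z ≠ q.2 → q.1 z = p.1 z then
      Pb p.2 q.2 * ((m : ℝ)⁻¹) ^ (({p.2, q.2} : Finset V).card)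
    else 0

/-- Simple random walk on a `d`-regular graph. -/
noncomputable def srw {V : Type} [Fintype V] [DecidableEq V]
    (G : SimpleGraph V) (d : ℕ) : Matrix V V ℝ :=
  fun x y => if G.Adj x y then (d : ℝ)⁻¹ else 0

/-!
Let `n = |X|`, let `E` be the Dirichlet form, and let `h_z(x) = E_x[T_z]`. Since
`(1 - P) h_z = 1 - n 𝟙_z`, every function `f` satisfies `E(f, h_z) = ∑ f - n f(z)`. For points
`b₁, …, b_k`, put `u = ∑ h_{b_i}`. If `f` vanishes at all the `b_i`, then Cauchy–Schwarz for `E`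
bounds `(k ∑ f)²` by `E(u, u) E(f, f)`, and together with the Poincaré inequality with constant
`T = T_rel` this bounds the Dirichlet eigenvalue of `1 - P` off `{b₁, …, b_k}` from below in terms
of `E(u, u)`.

Summed over all points of a set `A`, the potentials have energy at most `T n² |A|`, so the average
of `E(h_x, h_y)` over pairs in `A` is at most `T n² / |A|`, while `E(h_x, h_x) ≤ n H`. Averaging
over random `k`-tuples in `A` with `k ≈ |A| / T + 1` therefore yields a tuple whose Dirichlet
eigenvalue is at least `k / (4 c₁ n)`, so it is avoided up to time `t` with probability at most
`n exp(-t k / (4 c₁ n))`.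

If `|S_t| = s ≥ 1`, then the chain avoids such a tuple, and there are at most `n ^ k` of them. The
union bound makes `θ ^ s Pr(|S_t| = s)` at most `8⁻ˢ δ` past the threshold, and these terms sum
geometrically.
-/

open Matrix

section QuadraticForms

variable {V : Type*} [Fintype V] {P : Matrix V V ℝ}

lemma dotProduct_mulVec_comm {R : Type*} [CommSemiring R] {M : Matrix V V R} (hs : M.IsSymm)
    (f g : V → R) : f ⬝ᵥ M *ᵥ g = g ⬝ᵥ M *ᵥ f := by
  rw [dotProduct_mulVec, ← mulVec_transpose, hs.eq, dotProduct_comm]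

lemma abs_dotProduct_mulVec_self_le (hP : ∀ x y, 0 ≤ P x y) (f : V → ℝ) :
    |f ⬝ᵥ P *ᵥ f| ≤ |f| ⬝ᵥ P *ᵥ |f| := by
  simp only [dotProduct, mulVec, mul_sum, Pi.abs_apply]
  refine (abs_sum_le_sum_abs _ _).trans (sum_le_sum fun x _ => ?_)
  refine (abs_sum_le_sum_abs _ _).trans (sum_le_sum fun y _ => ?_)
  rw [abs_mul, abs_mul, abs_of_nonneg (hP x y)]

lemma dotProduct_self_sub_average [Nonempty V] (f : V → ℝ) :
    (f - ((∑ x, f x) / Fintype.card V) • 1) ⬝ᵥ (f - ((∑ x, f x) / Fintype.card V) • 1) =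
      f ⬝ᵥ f - (∑ x, f x) ^ 2 / Fintype.card V := by
  have card_ne : (Fintype.card V : ℝ) ≠ 0 := Nat.cast_ne_zero.2 Fintype.card_ne_zero
  set m := (∑ x, f x) / Fintype.card V with hm
  have hsum : ∑ x, f x = Fintype.card V * m := by rw [hm]; field_simp
  have hone : (1 : V → ℝ) ⬝ᵥ 1 = Fintype.card V := by simp
  rw [sub_dotProduct, dotProduct_sub, dotProduct_sub, smul_dotProduct, smul_dotProduct,
    dotProduct_smul, dotProduct_smul, one_dotProduct, dotProduct_one, hone, hsum]
  simp only [smul_eq_mul]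
  field_simp
  ring

lemma dotProduct_mulVec_self_le_sum_div (hP : ∀ x y, 0 ≤ P x y) (hs : P.IsSymm) {h : V → ℝ}
    (hpos : ∀ x, 0 < h x) (f : V → ℝ) :
    f ⬝ᵥ P *ᵥ f ≤ ∑ x, f x ^ 2 * ((P *ᵥ h) x / h x) := by
  have am_gm (x y : V) : 2 * (f x * f y) ≤ f x ^ 2 * (h y / h x) + f y ^ 2 * (h x / h y) := by
    have hx := hpos x
    have hy := hpos y
    have expand : f x ^ 2 * (h y / h x) + f y ^ 2 * (h x / h y) - 2 * (f x * f y) =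
        (f x * h y - f y * h x) ^ 2 / (h x * h y) := by
      field_simp
      ring
    rw [← sub_nonneg, expand]
    positivity
  have swap : ∑ x, ∑ y, P x y * (f y ^ 2 * (h x / h y)) =
      ∑ x, ∑ y, P x y * (f x ^ 2 * (h y / h x)) := by
    rw [sum_comm]
    simp only [hs.apply]
  have doubled : 2 * (f ⬝ᵥ P *ᵥ f) ≤ 2 * ∑ x, ∑ y, P x y * (f x ^ 2 * (h y / h x)) := by
    calc 2 * (f ⬝ᵥ P *ᵥ f) = ∑ x, ∑ y, P x y * (2 * (f x * f y)) := by
          simp only [dotProduct, mulVec, mul_sum]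
          exact sum_congr rfl fun x _ => sum_congr rfl fun y _ => by ring
      _ ≤ ∑ x, ∑ y, P x y * (f x ^ 2 * (h y / h x) + f y ^ 2 * (h x / h y)) :=
          sum_le_sum fun x _ => sum_le_sum fun y _ =>
            mul_le_mul_of_nonneg_left (am_gm x y) (hP x y)
      _ = 2 * ∑ x, ∑ y, P x y * (f x ^ 2 * (h y / h x)) := by
          simp only [mul_add, sum_add_distrib, swap, two_mul]
  refine (le_of_mul_le_mul_left doubled two_pos).trans_eq (sum_congr rfl fun x _ => ?_)
  simp only [mulVec, dotProduct, sum_div, mul_sum]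
  exact sum_congr rfl fun y _ => by ring

variable [DecidableEq V]

/-- The Dirichlet form `(f, g) ↦ ⟨f, (1 - P) g⟩` of a symmetric chain, with respect to the
counting measure rather than the stationary distribution. -/
noncomputable def dirichletForm (P : Matrix V V ℝ) : LinearMap.BilinForm ℝ (V → ℝ) :=
  toBilin' (1 - P)

lemma dirichletForm_apply (f g : V → ℝ) : dirichletForm P f g = f ⬝ᵥ (g - P *ᵥ g) := by
  rw [dirichletForm, toBilin'_apply', sub_mulVec, one_mulVec]

lemma dirichletForm_self (f : V → ℝ) : dirichletForm P f f = f ⬝ᵥ f - f ⬝ᵥ P *ᵥ f := by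
  rw [dirichletForm_apply, dotProduct_sub]

lemma dirichletForm_comm (hs : P.IsSymm) (f g : V → ℝ) :
    dirichletForm P f g = dirichletForm P g f := by
  rw [dirichletForm_apply, dirichletForm_apply, dotProduct_sub, dotProduct_sub,
    dotProduct_comm, dotProduct_mulVec_comm hs]

/-- `lam` is a lower bound for the smallest Dirichlet eigenvalue of `1 - P` with zero boundary
condition on `B`, in variational form. -/
def HasDirichletGap (P : Matrix V V ℝ) (B : Finset V) (lam : ℝ) : Prop :=
  ∀ f : V → ℝ, (∀ x ∈ B, f x = 0) → lam * (f ⬝ᵥ f) ≤ dirichletForm P f f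

/-- The Poincaré inequality for `P` with constant `T`; the relaxation time is such a `T`. -/
def HasPoincareConst (P : Matrix V V ℝ) (T : ℝ) : Prop :=
  ∀ f : V → ℝ, ∑ x, f x = 0 → f ⬝ᵥ f ≤ T * dirichletForm P f f

end QuadraticForms

section DirichletForm

variable {V : Type} [Fintype V] {P : Matrix V V ℝ}

lemma IsStoch.mulVec_one (hP : IsStoch P) : P *ᵥ 1 = 1 := by
  ext x
  simpa [mulVec, dotProduct] using hP.2 x

lemma IsStoch.sum_mulVec (hP : IsStoch P) (hs : P.IsSymm) (f : V → ℝ) :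
    ∑ x, (P *ᵥ f) x = ∑ x, f x := by
  rw [← one_dotProduct, dotProduct_mulVec_comm hs, hP.mulVec_one, dotProduct_one]

variable [DecidableEq V]

lemma IsStoch.two_mul_dirichletForm_self (hP : IsStoch P) (hs : P.IsSymm) (f : V → ℝ) :
    2 * dirichletForm P f f = ∑ x, ∑ y, P x y * (f x - f y) ^ 2 := by
  have sum_left : ∑ x, ∑ y, P x y * f x ^ 2 = f ⬝ᵥ f := by
    simp only [← sum_mul, hP.2, one_mul, dotProduct, sq]
  have sum_right : ∑ x, ∑ y, P x y * f y ^ 2 = f ⬝ᵥ f := by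
    rw [sum_comm, ← sum_left]
    simp only [hs.apply]
  have sum_cross : ∑ x, ∑ y, P x y * (f x * f y) = f ⬝ᵥ P *ᵥ f := by
    simp only [dotProduct, mulVec, mul_sum, mul_left_comm]
  calc 2 * dirichletForm P f f
      = f ⬝ᵥ f + f ⬝ᵥ f - 2 * (f ⬝ᵥ P *ᵥ f) := by rw [dirichletForm_self]; ring
    _ = ∑ x, ∑ y, P x y * (f x - f y) ^ 2 := by
      nth_rewrite 1 [← sum_left]
      rw [← sum_right, ← sum_cross]
      simp only [mul_sum, ← sum_add_distrib, ← sum_sub_distrib]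
      exact sum_congr rfl fun x _ => sum_congr rfl fun y _ => by ring

lemma IsStoch.dirichletForm_self_nonneg (hP : IsStoch P) (hs : P.IsSymm) (f : V → ℝ) :
    0 ≤ dirichletForm P f f := by
  have : 0 ≤ ∑ x, ∑ y, P x y * (f x - f y) ^ 2 :=
    sum_nonneg fun x _ => sum_nonneg fun y _ => mul_nonneg (hP.1 x y) (sq_nonneg _)
  linarith [hP.two_mul_dirichletForm_self hs f]

lemma IsStoch.dirichletForm_sq_le (hP : IsStoch P) (hs : P.IsSymm) (f g : V → ℝ) :
    dirichletForm P f g ^ 2 ≤ dirichletForm P f f * dirichletForm P g g :=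
  (dirichletForm P).apply_sq_le_of_symm (hP.dirichletForm_self_nonneg hs)
    ⟨dirichletForm_comm hs⟩ f g

lemma IsStoch.dirichletForm_smul_one_right (hP : IsStoch P) (f : V → ℝ) (r : ℝ) :
    dirichletForm P f (r • 1) = 0 := by
  rw [dirichletForm_apply, mulVec_smul, hP.mulVec_one, sub_self, dotProduct_zero]

lemma IsStoch.dirichletForm_self_sub_smul_one (hP : IsStoch P) (hs : P.IsSymm) (f : V → ℝ)
    (r : ℝ) : dirichletForm P (f - r • 1) (f - r • 1) = dirichletForm P f f := by
  have left_zero (g : V → ℝ) : dirichletForm P (r • 1) g = 0 :=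
    (dirichletForm_comm hs _ g).trans (hP.dirichletForm_smul_one_right g r)
  rw [LinearMap.BilinForm.sub_left, left_zero, sub_zero, LinearMap.BilinForm.sub_right,
    hP.dirichletForm_smul_one_right, sub_zero]

lemma IsStoch.pow_nonneg (hP : IsStoch P) (n : ℕ) (x y : V) : 0 ≤ (P ^ n) x y := by
  induction n generalizing y with
  | zero => rw [pow_zero, one_apply]; split_ifs <;> norm_num
  | succ n ih =>
    rw [pow_succ, mul_apply]
    exact sum_nonneg fun z _ => mul_nonneg (ih z) (hP.1 z y)

lemma IsStoch.apply_eq_of_dirichletForm_self_eq_zero (hP : IsStoch P) (hs : P.IsSymm)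
    {f : V → ℝ} (hf : dirichletForm P f f = 0) {x y : V} (hxy : P x y ≠ 0) : f x = f y := by
  have term_nonneg (x y : V) : 0 ≤ P x y * (f x - f y) ^ 2 := mul_nonneg (hP.1 x y) (sq_nonneg _)
  have sum_zero : ∑ x, ∑ y, P x y * (f x - f y) ^ 2 = 0 := by
    rw [← hP.two_mul_dirichletForm_self hs, hf, mul_zero]
  have row_zero := (Fintype.sum_eq_zero_iff_of_nonneg
    fun x => sum_nonneg fun y _ => term_nonneg x y).1 sum_zero
  have term_zero := (Fintype.sum_eq_zero_iff_of_nonneg (term_nonneg x)).1 (congrFun row_zero x)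
  have := (mul_eq_zero.1 (congrFun term_zero y)).resolve_left hxy
  linarith [pow_eq_zero_iff two_ne_zero |>.1 this]

lemma IsStoch.const_of_dirichletForm_self_eq_zero (hP : IsStoch P) (hs : P.IsSymm)
    (hI : Irred P) {f : V → ℝ} (hf : dirichletForm P f f = 0) (x y : V) : f x = f y := by
  have along_path (n : ℕ) : ∀ y, 0 < (P ^ n) x y → f x = f y := by
    induction n with
    | zero =>
      intro y hy
      by_contra hne
      rw [pow_zero, one_apply_ne fun h => hne (congrArg f h)] at hy
      exact lt_irrefl _ hy
    | succ n ih =>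
      intro y hy
      rw [pow_succ, mul_apply] at hy
      obtain ⟨z, -, hz⟩ := exists_ne_zero_of_sum_ne_zero hy.ne'
      have hxz := (hP.pow_nonneg n x z).lt_of_ne' (left_ne_zero_of_mul hz)
      exact (ih z hxz).trans
        (hP.apply_eq_of_dirichletForm_self_eq_zero hs hf (right_ne_zero_of_mul hz))
  obtain ⟨n, hn⟩ := hI x y
  exact along_path n y hn

end DirichletForm

section Gaps

variable {V : Type} [Fintype V] [DecidableEq V] {P : Matrix V V ℝ}

lemma HasPoincareConst.dotProduct_self_sub_average_le {T : ℝ} [Nonempty V]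
    (hT : HasPoincareConst P T) (hP : IsStoch P) (hs : P.IsSymm) (f : V → ℝ) :
    (f - ((∑ x, f x) / Fintype.card V) • 1) ⬝ᵥ (f - ((∑ x, f x) / Fintype.card V) • 1) ≤
      T * dirichletForm P f f := by
  rw [← hP.dirichletForm_self_sub_smul_one hs f ((∑ x, f x) / Fintype.card V)]
  refine hT _ ?_
  simp [mul_div_cancel₀]

lemma HasPoincareConst.dotProduct_self_le {T : ℝ} [Nonempty V] (hT : HasPoincareConst P T)
    (hP : IsStoch P) (hs : P.IsSymm) (f : V → ℝ) :
    f ⬝ᵥ f ≤ T * dirichletForm P f f + (∑ x, f x) ^ 2 / Fintype.card V := by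
  have := hT.dotProduct_self_sub_average_le hP hs f
  rw [dotProduct_self_sub_average] at this
  linarith

lemma HasPoincareConst.hasDirichletGap_singleton {T : ℝ} (hT : HasPoincareConst P T)
    (hT0 : 0 < T) (hP : IsStoch P) (hs : P.IsSymm) (z : V) :
    HasDirichletGap P {z} ((Fintype.card V + 1) * T)⁻¹ := by
  have : Nonempty V := ⟨z⟩
  intro f hf
  have : (0 : ℝ) < Fintype.card V := Nat.cast_pos.2 Fintype.card_pos
  set m := (∑ x, f x) / Fintype.card V with hm
  have variance_le : (f - m • 1) ⬝ᵥ (f - m • 1) ≤ T * dirichletForm P f f :=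
    hT.dotProduct_self_sub_average_le hP hs f
  have average_sq_le : m ^ 2 ≤ (f - m • 1) ⬝ᵥ (f - m • 1) := by
    have := single_le_sum (f := fun x => (f - m • 1) x * (f - m • 1) x)
      (fun x _ => mul_self_nonneg _) (mem_univ z)
    simpa [dotProduct, hf z (mem_singleton_self z), sq] using this
  have norm_eq := dotProduct_self_sub_average f
  rw [← hm, show (∑ x, f x) ^ 2 / Fintype.card V = Fintype.card V * m ^ 2 by
    rw [hm]; field_simp] at norm_eq
  rw [inv_mul_le_iff₀ (by positivity)]
  nlinarith

/-- Barta's inequality. -/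
lemma IsStoch.hasDirichletGap_of_superharmonic (hP : IsStoch P) (hs : P.IsSymm) {B : Finset V}
    {h : V → ℝ} {lam : ℝ} (hpos : ∀ x, 0 < h x)
    (hlam : ∀ x, x ∉ B → lam * h x ≤ h x - (P *ᵥ h) x) : HasDirichletGap P B lam := by
  intro f hf
  have term_le (x : V) : f x ^ 2 * ((P *ᵥ h) x / h x) ≤ (1 - lam) * (f x * f x) := by
    by_cases hx : x ∈ B
    · simp [hf x hx]
    · have : (P *ᵥ h) x / h x ≤ 1 - lam := (div_le_iff₀ (hpos x)).2 (by linarith [hlam x hx])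
      nlinarith [sq_nonneg (f x)]
  have cross_le : f ⬝ᵥ P *ᵥ f ≤ (1 - lam) * (f ⬝ᵥ f) := by
    refine (dotProduct_mulVec_self_le_sum_div hP.1 hs hpos f).trans ?_
    rw [dotProduct, mul_sum]
    exact sum_le_sum fun x _ => term_le x
  rw [dirichletForm_self]
  linarith

end Gaps

section Survival

variable {V : Type} [Fintype V] [DecidableEq V] {P : Matrix V V ℝ}

/-- The probability that the chain started at `x` avoids `B` during times `0, …, m`. -/
noncomputable def survProb (P : Matrix V V ℝ) (B : Finset V) : ℕ → V → ℝ
  | 0 => fun x => if x ∈ B then 0 else 1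
  | m + 1 => fun x => if x ∈ B then 0 else (P *ᵥ survProb P B m) x

lemma survProb_of_mem {B : Finset V} {x : V} (hx : x ∈ B) (m : ℕ) : survProb P B m x = 0 := by
  cases m <;> simp only [survProb, hx, if_true]

lemma survProb_zero_of_notMem {B : Finset V} {x : V} (hx : x ∉ B) : survProb P B 0 x = 1 := by
  simp only [survProb, hx, if_false]

lemma survProb_succ_of_notMem {B : Finset V} {x : V} (hx : x ∉ B) (m : ℕ) :
    survProb P B (m + 1) x = (P *ᵥ survProb P B m) x := by
  simp only [survProb, hx, if_false]

lemma prPath_zero_avoid (P : Matrix V V ℝ) (B : Finset V) (μ : V → ℝ) :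
    prPath P μ 0 (fun ω => ∀ i, ω i ∉ B) = μ ⬝ᵥ survProb P B 0 := by
  rw [prPath, ← (Equiv.funUnique (Fin 1) V).symm.sum_comp]
  exact sum_congr rfl fun x _ => by simp [pathProb, survProb]

lemma prPath_succ_avoid (P : Matrix V V ℝ) (B : Finset V) (μ : V → ℝ) (m : ℕ) :
    prPath P μ (m + 1) (fun ω => ∀ i, ω i ∉ B) =
      ∑ x, if x ∈ B then 0 else prPath P (μ x • P x) m (fun ω => ∀ i, ω i ∉ B) := by
  rw [prPath, ← (Fin.consEquiv fun _ : Fin (m + 2) => V).sum_comp, Fintype.sum_prod_type]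
  refine sum_congr rfl fun x _ => ?_
  by_cases hx : x ∈ B
  · simp [hx, Fin.forall_fin_succ, Fin.consEquiv]
  · rw [if_neg hx, prPath]
    refine sum_congr rfl fun ω _ => ?_
    simp [hx, Fin.forall_fin_succ, Fin.consEquiv, pathProb, Fin.prod_univ_succ, mul_assoc]

lemma prPath_avoid (P : Matrix V V ℝ) (B : Finset V) (m : ℕ) (μ : V → ℝ) :
    prPath P μ m (fun ω => ∀ i, ω i ∉ B) = μ ⬝ᵥ survProb P B m := by
  induction m generalizing μ with
  | zero => exact prPath_zero_avoid P B μ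
  | succ m ih =>
    rw [prPath_succ_avoid]
    refine sum_congr rfl fun x _ => ?_
    by_cases hx : x ∈ B
    · rw [if_pos hx, survProb_of_mem hx, mul_zero]
    · rw [if_neg hx, ih, survProb_succ_of_notMem hx, smul_dotProduct, smul_eq_mul, mulVec]

lemma IsStoch.survProb_empty (hP : IsStoch P) (m : ℕ) : survProb P ∅ m = 1 := by
  induction m with
  | zero => exact funext fun x => survProb_zero_of_notMem (notMem_empty x)
  | succ m ih =>
    exact funext fun x => by rw [survProb_succ_of_notMem (notMem_empty x), ih, hP.mulVec_one]

lemma IsStoch.survProb_nonneg (hP : IsStoch P) (B : Finset V) (m : ℕ) (x : V) :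
    0 ≤ survProb P B m x := by
  by_cases hx : x ∈ B
  · exact (survProb_of_mem hx m).ge
  induction m generalizing x with
  | zero => rw [survProb_zero_of_notMem hx]; exact zero_le_one
  | succ m ih =>
    rw [survProb_succ_of_notMem hx]
    refine sum_nonneg fun y _ => mul_nonneg (hP.1 x y) ?_
    by_cases hy : y ∈ B
    · exact (survProb_of_mem hy m).ge
    · exact ih y hy

lemma HasDirichletGap.abs_dotProduct_mulVec_self_le {B : Finset V} {lam : ℝ}
    (hB : HasDirichletGap P B lam) (hP : IsStoch P) {f : V → ℝ} (hf : ∀ x ∈ B, f x = 0) :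
    |f ⬝ᵥ P *ᵥ f| ≤ Real.exp (-lam) * (f ⬝ᵥ f) := by
  have gap := hB |f| fun x hx => by rw [Pi.abs_apply, hf x hx, abs_zero]
  have abs_norm : |f| ⬝ᵥ |f| = f ⬝ᵥ f := by simp only [dotProduct, Pi.abs_apply, abs_mul_abs_self]
  rw [dirichletForm_self, abs_norm] at gap
  calc |f ⬝ᵥ P *ᵥ f| ≤ |f| ⬝ᵥ P *ᵥ |f| := Paper.abs_dotProduct_mulVec_self_le hP.1 f
    _ ≤ (-lam + 1) * (f ⬝ᵥ f) := by linarith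
    _ ≤ Real.exp (-lam) * (f ⬝ᵥ f) :=
      mul_le_mul_of_nonneg_right (Real.add_one_le_exp _)
        (Fintype.sum_nonneg fun x => mul_self_nonneg (f x))

lemma HasDirichletGap.two_mul_dotProduct_mulVec_le {B : Finset V} {lam : ℝ}
    (hB : HasDirichletGap P B lam) (hP : IsStoch P) (hs : P.IsSymm) {f g : V → ℝ}
    (hf : ∀ x ∈ B, f x = 0) (hg : ∀ x ∈ B, g x = 0) :
    2 * (f ⬝ᵥ P *ᵥ g) ≤ Real.exp (-lam) * (f ⬝ᵥ f + g ⬝ᵥ g) := by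
  have hadd := hB.abs_dotProduct_mulVec_self_le hP (f := f + g)
    fun x hx => by rw [Pi.add_apply, hf x hx, hg x hx, add_zero]
  have hsub := hB.abs_dotProduct_mulVec_self_le hP (f := f - g)
    fun x hx => by rw [Pi.sub_apply, hf x hx, hg x hx, sub_zero]
  have hcomm := dotProduct_mulVec_comm hs f g
  simp only [mulVec_add, mulVec_sub, dotProduct_add, dotProduct_sub, add_dotProduct,
    sub_dotProduct, dotProduct_comm g f] at hadd hsub
  linarith [(abs_le.1 hadd).2, (abs_le.1 hsub).1]

lemma survProb_succ_dotProduct_mulVec (B : Finset V) (m : ℕ) :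
    survProb P B (m + 1) ⬝ᵥ P *ᵥ survProb P B m =
      survProb P B (m + 1) ⬝ᵥ survProb P B (m + 1) := by
  refine sum_congr rfl fun x _ => ?_
  by_cases hx : x ∈ B
  · rw [survProb_of_mem hx, zero_mul, zero_mul]
  · rw [← survProb_succ_of_notMem hx]

lemma HasDirichletGap.survProb_succ_dotProduct_self_le {B : Finset V} {lam : ℝ}
    (hB : HasDirichletGap P B lam) (hP : IsStoch P) (hs : P.IsSymm) (m : ℕ) :
    survProb P B (m + 1) ⬝ᵥ survProb P B (m + 1) ≤
      Real.exp (-lam) ^ 2 * (survProb P B m ⬝ᵥ survProb P B m) := by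
  set ρ := Real.exp (-lam) with hρ
  have hρ0 : 0 < ρ := Real.exp_pos _
  have scaled := hB.two_mul_dotProduct_mulVec_le hP hs (f := survProb P B (m + 1))
    (g := ρ • survProb P B m) (fun x hx => survProb_of_mem hx _)
    fun x hx => by rw [Pi.smul_apply, survProb_of_mem hx, smul_zero]
  simp only [mulVec_smul, dotProduct_smul, smul_dotProduct, smul_eq_mul,
    survProb_succ_dotProduct_mulVec, ← hρ] at scaled
  nlinarith [le_of_mul_le_mul_left (a := ρ) (by linarith) hρ0]

lemma HasDirichletGap.survProb_dotProduct_self_le {B : Finset V} {lam : ℝ}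
    (hB : HasDirichletGap P B lam) (hP : IsStoch P) (hs : P.IsSymm) (m : ℕ) :
    survProb P B m ⬝ᵥ survProb P B m ≤ Fintype.card V * (Real.exp (-lam) ^ m) ^ 2 := by
  induction m with
  | zero =>
    rw [pow_zero, one_pow, mul_one, dotProduct]
    refine (sum_le_card_nsmul univ _ 1 fun x _ => ?_).trans_eq (by simp)
    simp only [survProb]
    split_ifs <;> norm_num
  | succ m ih =>
    calc _ ≤ Real.exp (-lam) ^ 2 * (survProb P B m ⬝ᵥ survProb P B m) :=
          hB.survProb_succ_dotProduct_self_le hP hs m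
      _ ≤ Real.exp (-lam) ^ 2 * (Fintype.card V * (Real.exp (-lam) ^ m) ^ 2) := by gcongr
      _ = _ := by ring

lemma HasDirichletGap.survProb_le {B : Finset V} {lam : ℝ}
    (hB : HasDirichletGap P B lam) (hP : IsStoch P) (hs : P.IsSymm) (m : ℕ) (x : V) :
    survProb P B m x ≤ Fintype.card V * Real.exp (-(m * lam)) := by
  have : Nonempty V := ⟨x⟩
  have card_one_le : (1 : ℝ) ≤ Fintype.card V := Nat.one_le_cast.2 Fintype.card_pos
  have exp_eq : Real.exp (-(m * lam)) = Real.exp (-lam) ^ m := by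
    rw [← Real.exp_nat_mul, mul_neg]
  rw [exp_eq]
  refine (abs_le_of_sq_le_sq' (a := survProb P B m x) ?_ (by positivity)).2
  calc survProb P B m x ^ 2 ≤ survProb P B m ⬝ᵥ survProb P B m := by
        rw [sq]
        exact single_le_sum (f := fun y => survProb P B m y * survProb P B m y)
          (fun y _ => mul_self_nonneg _) (mem_univ x)
    _ ≤ Fintype.card V * (Real.exp (-lam) ^ m) ^ 2 := hB.survProb_dotProduct_self_le hP hs m
    _ ≤ Fintype.card V ^ 2 * (Real.exp (-lam) ^ m) ^ 2 := by gcongr; nlinarith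
    _ = (Fintype.card V * Real.exp (-lam) ^ m) ^ 2 := (mul_pow _ _ 2).symm

lemma HasDirichletGap.prPath_avoid_le {B : Finset V} {lam : ℝ}
    (hB : HasDirichletGap P B lam) (hP : IsStoch P) (hs : P.IsSymm) {μ : V → ℝ}
    (hμ : ∀ x, 0 ≤ μ x) (hμ1 : ∑ x, μ x = 1) (m : ℕ) :
    prPath P μ m (fun ω => ∀ i, ω i ∉ B) ≤ Fintype.card V * Real.exp (-(m * lam)) := by
  rw [prPath_avoid, dotProduct]
  calc ∑ x, μ x * survProb P B m x
      ≤ ∑ x, μ x * (Fintype.card V * Real.exp (-(m * lam))) :=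
        sum_le_sum fun x _ => mul_le_mul_of_nonneg_left (hB.survProb_le hP hs m x) (hμ x)
    _ = Fintype.card V * Real.exp (-(m * lam)) := by rw [← sum_mul, hμ1, one_mul]

end Survival

section SpectralDecomposition

variable {V : Type*} {P : Matrix V V ℝ}

lemma isHermitian_of_isSymm (hs : P.IsSymm) : P.IsHermitian :=
  (conjTranspose_eq_transpose_of_trivial P).trans hs

lemma isSymm_of_isHermitian (hH : P.IsHermitian) : P.IsSymm :=
  (conjTranspose_eq_transpose_of_trivial P).symm.trans hH

variable [Fintype V] [DecidableEq V]

lemma dotProduct_eq_sum_eigenvectorBasis (hH : P.IsHermitian) (f g : V → ℝ) :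
    f ⬝ᵥ g = ∑ i, (f ⬝ᵥ ⇑(hH.eigenvectorBasis i)) * (g ⬝ᵥ ⇑(hH.eigenvectorBasis i)) := by
  have := hH.eigenvectorBasis.sum_inner_mul_inner (WithLp.toLp 2 f) (WithLp.toLp 2 g)
  simp only [PiLp.inner_apply, RCLike.inner_apply, conj_trivial] at this
  simp only [dotProduct, mul_comm (f _)]
  rw [← this]

lemma dotProduct_mulVec_eq_sum_eigenvalues (hH : P.IsHermitian) (f : V → ℝ) :
    f ⬝ᵥ P *ᵥ f = ∑ i, hH.eigenvalues i * (f ⬝ᵥ ⇑(hH.eigenvectorBasis i)) ^ 2 := by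
  rw [dotProduct_eq_sum_eigenvectorBasis hH]
  refine sum_congr rfl fun i _ => ?_
  rw [dotProduct_comm (P *ᵥ f), dotProduct_mulVec_comm (isSymm_of_isHermitian hH),
    hH.mulVec_eigenvectorBasis, dotProduct_smul, smul_eq_mul]
  ring

lemma dirichletForm_self_eq_sum_eigenvalues (hH : P.IsHermitian) (f : V → ℝ) :
    dirichletForm P f f =
      ∑ i, (1 - hH.eigenvalues i) * (f ⬝ᵥ ⇑(hH.eigenvectorBasis i)) ^ 2 := by
  rw [dirichletForm_self, dotProduct_mulVec_eq_sum_eigenvalues hH,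
    dotProduct_eq_sum_eigenvectorBasis hH, ← sum_sub_distrib]
  exact sum_congr rfl fun i _ => by ring

lemma eigenvectorBasis_dotProduct_self (hH : P.IsHermitian) (i : V) :
    ⇑(hH.eigenvectorBasis i) ⬝ᵥ ⇑(hH.eigenvectorBasis i) = 1 := by
  have := hH.eigenvectorBasis.orthonormal.1 i
  rw [EuclideanSpace.norm_eq, Real.sqrt_eq_one] at this
  simpa [dotProduct, sq] using this

lemma dirichletForm_eigenvectorBasis_self (hH : P.IsHermitian) (i : V) :
    dirichletForm P (hH.eigenvectorBasis i) (hH.eigenvectorBasis i) = 1 - hH.eigenvalues i := by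
  rw [dirichletForm_self, hH.mulVec_eigenvectorBasis, dotProduct_smul,
    eigenvectorBasis_dotProduct_self, smul_eq_mul, mul_one]

lemma mul_self_eq_one_of_eigenvalues (hH : P.IsHermitian) (h : ∀ i, |hH.eigenvalues i| = 1) :
    P * P = 1 := by
  have diag_sq : diagonal (RCLike.ofReal ∘ hH.eigenvalues : V → ℝ) *
      diagonal (RCLike.ofReal ∘ hH.eigenvalues) = 1 := by
    rw [diagonal_mul_diagonal, ← diagonal_one]
    congr 1 with i
    exact (abs_mul_abs_self (hH.eigenvalues i)).symm.trans (by rw [h i, one_mul])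
  calc P * P = _ * _ := congrArg₂ _ hH.spectral_theorem hH.spectral_theorem
    _ = 1 := by rw [← map_mul, diag_sq, map_one]

end SpectralDecomposition

section RelaxationTime

variable {V : Type} [Fintype V] [DecidableEq V] {P : Matrix V V ℝ}

lemma IsStoch.abs_eigenvalues_le_one (hP : IsStoch P) (hH : P.IsHermitian) (i : V) :
    |hH.eigenvalues i| ≤ 1 := by
  set v : V → ℝ := ⇑(hH.eigenvectorBasis i)
  have form_nonneg := hP.dirichletForm_self_nonneg (isSymm_of_isHermitian hH) |v|
  have abs_norm : |v| ⬝ᵥ |v| = 1 := by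
    rw [← eigenvectorBasis_dotProduct_self hH i]
    simp only [dotProduct, Pi.abs_apply, abs_mul_abs_self, v]
  rw [dirichletForm_self, abs_norm] at form_nonneg
  calc |hH.eigenvalues i| = |v ⬝ᵥ P *ᵥ v| := by
        rw [hH.mulVec_eigenvectorBasis, dotProduct_smul, eigenvectorBasis_dotProduct_self,
          smul_eq_mul, mul_one]
    _ ≤ |v| ⬝ᵥ P *ᵥ |v| := abs_dotProduct_mulVec_self_le hP.1 v
    _ ≤ 1 := by linarith

lemma IsStoch.dotProduct_eigenvectorBasis_eq_zero (hP : IsStoch P) (hI : Irred P)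
    (hH : P.IsHermitian) {i : V} (hi : hH.eigenvalues i = 1) {f : V → ℝ} (hf : ∑ x, f x = 0) :
    f ⬝ᵥ ⇑(hH.eigenvectorBasis i) = 0 := by
  have form_zero := dirichletForm_eigenvectorBasis_self hH i
  rw [hi, sub_self] at form_zero
  have const (x : V) := hP.const_of_dirichletForm_self_eq_zero (isSymm_of_isHermitian hH) hI
    form_zero x i
  simp only [dotProduct, const, ← sum_mul, hf, zero_mul]

lemma IsStoch.hasPoincareConst_of_eigenvalues (hP : IsStoch P) (hI : Irred P)
    (hH : P.IsHermitian) {T : ℝ}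
    (hT : ∀ i, hH.eigenvalues i ≠ 1 → 1 ≤ T * (1 - hH.eigenvalues i)) :
    HasPoincareConst P T := by
  intro f hf
  rw [dotProduct_eq_sum_eigenvectorBasis hH, dirichletForm_self_eq_sum_eigenvalues hH, mul_sum]
  refine sum_le_sum fun i _ => ?_
  by_cases hi : hH.eigenvalues i = 1
  · simp [hP.dotProduct_eigenvectorBasis_eq_zero hI hH hi hf]
  · rw [← mul_assoc, ← sq]
    exact le_mul_of_one_le_left (sq_nonneg _) (hT i hi)

lemma IsStoch.exists_hasPoincareConst (hP : IsStoch P) (hs : P.IsSymm) (hI : Irred P) :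
    ∃ T, 0 < T ∧ HasPoincareConst P T := by
  have hH := isHermitian_of_isSymm hs
  have gap_nonneg (i : V) : 0 ≤ 1 - hH.eigenvalues i :=
    sub_nonneg.2 ((le_abs_self _).trans (hP.abs_eigenvalues_le_one hH i))
  have sum_nonneg : 0 ≤ ∑ i, (1 - hH.eigenvalues i)⁻¹ :=
    sum_nonneg fun i _ => inv_nonneg.2 (gap_nonneg i)
  refine ⟨∑ i, (1 - hH.eigenvalues i)⁻¹ + 1, by linarith,
    hP.hasPoincareConst_of_eigenvalues hI hH fun i hi => ?_⟩
  have inv_le : (1 - hH.eigenvalues i)⁻¹ ≤ ∑ i, (1 - hH.eigenvalues i)⁻¹ :=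
    single_le_sum (f := fun i => (1 - hH.eigenvalues i)⁻¹)
      (fun j _ => inv_nonneg.2 (gap_nonneg j)) (mem_univ i)
  calc 1 = (1 - hH.eigenvalues i)⁻¹ * (1 - hH.eigenvalues i) :=
        (inv_mul_cancel₀ (sub_ne_zero.2 (Ne.symm hi))).symm
    _ ≤ _ := mul_le_mul_of_nonneg_right (by linarith) (gap_nonneg i)

lemma one_div_one_sub_abs_eigenvalues_le_Trel (hH : P.IsHermitian) {i : V}
    (hi : hH.eigenvalues i ≠ 1) : 1 / (1 - |hH.eigenvalues i|) ≤ Trel P :=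
  le_csSup (((finite_real_spectrum (A := P)).subset Set.sdiff_subset).image _).bddAbove
    ⟨_, ⟨hH.eigenvalues_mem_spectrum_real i, hi⟩, rfl⟩

lemma IsStoch.Trel_nonneg (hP : IsStoch P) (hs : P.IsSymm) : 0 ≤ Trel P := by
  have hH := isHermitian_of_isSymm hs
  apply Real.sSup_nonneg
  rintro _ ⟨l, ⟨hl, -⟩, rfl⟩
  rw [hH.spectrum_real_eq_range_eigenvalues] at hl
  obtain ⟨i, rfl⟩ := hl
  exact div_nonneg zero_le_one (sub_nonneg.2 (hP.abs_eigenvalues_le_one hH i))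

lemma IsStoch.one_le_Trel (hP : IsStoch P) (hs : P.IsSymm) (hPP : P * P ≠ 1) : 1 ≤ Trel P := by
  have hH := isHermitian_of_isSymm hs
  obtain ⟨i, hi⟩ := not_forall.1 (mt (mul_self_eq_one_of_eigenvalues hH) hPP)
  have abs_lt := (hP.abs_eigenvalues_le_one hH i).lt_of_ne hi
  refine le_trans ?_ (one_div_one_sub_abs_eigenvalues_le_Trel hH (i := i)
    fun h => hi (by rw [h, abs_one]))
  exact one_le_one_div (sub_pos.2 abs_lt) (sub_le_self 1 (abs_nonneg _))

/-- The eigenvalue `-1` contributes the junk value `1 / 0 = 0` to `Trel P`, but its gap `2` in the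
Poincaré inequality is covered by `1 ≤ Trel P`. -/
lemma IsStoch.hasPoincareConst_Trel (hP : IsStoch P) (hs : P.IsSymm) (hI : Irred P)
    (hPP : P * P ≠ 1) : HasPoincareConst P (Trel P) := by
  have hH := isHermitian_of_isSymm hs
  have one_le := hP.one_le_Trel hs hPP
  refine hP.hasPoincareConst_of_eigenvalues hI hH fun i hi => ?_
  rcases (hP.abs_eigenvalues_le_one hH i).eq_or_lt with abs_eq | abs_lt
  · rw [(eq_or_eq_neg_of_abs_eq abs_eq).resolve_left hi]
    linarith
  · have le_Trel := one_div_one_sub_abs_eigenvalues_le_Trel hH hi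
    rw [div_le_iff₀ (sub_pos.2 abs_lt)] at le_Trel
    nlinarith [le_abs_self (hH.eigenvalues i)]

end RelaxationTime

section HittingTimes

variable {V : Type} [Fintype V] [DecidableEq V] {P : Matrix V V ℝ}

lemma hitExp_nonneg (x z : V) : 0 ≤ hitExp P x z := ENNReal.toReal_nonneg

lemma hitExp_le_maxHit (x z : V) : hitExp P x z ≤ maxHit P :=
  (le_ciSup (f := hitExp P x) (Set.finite_range _).bddAbove z).trans
    (le_ciSup (f := fun x => ⨆ y, hitExp P x y) (Set.finite_range _).bddAbove x)

lemma prPath_delta_avoid_singleton (x z : V) (m : ℕ) :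
    prPath P (delta x) m (fun ω => ∀ i, ω i ≠ z) = survProb P {z} m x := by
  have := prPath_avoid P {z} m (delta x)
  simp only [mem_singleton] at this
  rw [show prPath P (delta x) m (fun ω => ∀ i, ω i ≠ z) = _ from this]
  simp [delta, dotProduct]

lemma IsStoch.summable_survProb_singleton (hP : IsStoch P) (hs : P.IsSymm) (hI : Irred P)
    (x z : V) : Summable fun m => survProb P {z} m x := by
  obtain ⟨T, hT0, hT⟩ := hP.exists_hasPoincareConst hs hI
  set lam := ((Fintype.card V + 1) * T)⁻¹
  have lam_pos : 0 < lam := by positivity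
  have gap := hT.hasDirichletGap_singleton hT0 hP hs z
  refine Summable.of_nonneg_of_le (fun m => hP.survProb_nonneg _ m x)
    (fun m => gap.survProb_le hP hs m x) (Summable.mul_left _ ?_)
  simpa only [mul_neg] using Real.summable_exp_nat_mul_iff.2 (neg_neg_of_pos lam_pos)

lemma IsStoch.hitExp_eq_tsum (hP : IsStoch P) (hs : P.IsSymm) (hI : Irred P) (x z : V) :
    hitExp P x z = ∑' m, survProb P {z} m x := by
  simp only [hitExp, prPath_delta_avoid_singleton]
  rw [← ENNReal.ofReal_tsum_of_nonneg (fun m => hP.survProb_nonneg _ m x)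
    (hP.summable_survProb_singleton hs hI x z),
    ENNReal.toReal_ofReal (tsum_nonneg fun m => hP.survProb_nonneg _ m x)]

lemma IsStoch.hitExp_self (hP : IsStoch P) (hs : P.IsSymm) (hI : Irred P) (z : V) :
    hitExp P z z = 0 := by
  simp only [hP.hitExp_eq_tsum hs hI, survProb_of_mem (mem_singleton_self z), tsum_zero]

lemma IsStoch.hitExp_eq_one_add (hP : IsStoch P) (hs : P.IsSymm) (hI : Irred P) {x z : V}
    (hx : x ≠ z) : hitExp P x z = 1 + (P *ᵥ (hitExp P · z)) x := by
  have hxz : x ∉ ({z} : Finset V) := notMem_singleton.2 hx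
  simp only [hP.hitExp_eq_tsum hs hI, mulVec, dotProduct]
  rw [(hP.summable_survProb_singleton hs hI x z).tsum_eq_zero_add, survProb_zero_of_notMem hxz]
  simp only [survProb_succ_of_notMem hxz, mulVec, dotProduct]
  rw [Summable.tsum_finsetSum fun y _ => (hP.summable_survProb_singleton hs hI y z).mul_left _]
  simp only [tsum_mul_left]

/-- Off `z` this is the one-step equation; at `z` the value is forced because `(1 - P) h` sums
to zero over the states. -/
lemma IsStoch.hitExp_sub_mulVec (hP : IsStoch P) (hs : P.IsSymm) (hI : Irred P) (z : V) :
    (hitExp P · z) - P *ᵥ (hitExp P · z) = 1 - Pi.single z (Fintype.card V : ℝ) := by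
  set h : V → ℝ := (hitExp P · z)
  have off (x : V) (hx : x ≠ z) : (h - P *ᵥ h) x = 1 := by
    rw [Pi.sub_apply]
    linarith [hP.hitExp_eq_one_add hs hI hx]
  have total : ∑ x, (h - P *ᵥ h) x = 0 := by
    simp only [Pi.sub_apply, sum_sub_distrib, hP.sum_mulVec hs, sub_self]
  ext x
  rcases eq_or_ne x z with rfl | hx
  · have : Nonempty V := ⟨x⟩
    rw [← add_sum_erase _ _ (mem_univ x), sum_congr rfl fun y hy => off y (ne_of_mem_erase hy),
      sum_const, card_erase_of_mem (mem_univ x), card_univ, nsmul_eq_mul, mul_one,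
      Nat.cast_sub Fintype.card_pos, Nat.cast_one] at total
    rw [Pi.sub_apply (1 : V → ℝ), Pi.one_apply, Pi.single_eq_same]
    linarith
  · rw [off x hx, Pi.sub_apply, Pi.one_apply, Pi.single_eq_of_ne hx, sub_zero]

lemma IsStoch.dirichletForm_hitExp (hP : IsStoch P) (hs : P.IsSymm) (hI : Irred P)
    (f : V → ℝ) (z : V) :
    dirichletForm P f (hitExp P · z) = ∑ x, f x - Fintype.card V * f z := by
  rw [dirichletForm_apply, hP.hitExp_sub_mulVec hs hI, dotProduct_sub, dotProduct_one,
    dotProduct_single, mul_comm]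

lemma IsStoch.hasDirichletGap_singleton_of_hitExp_le (hP : IsStoch P) (hs : P.IsSymm)
    (hI : Irred P) {z : V} {R : ℝ} (hR : ∀ x, hitExp P x z + 1 ≤ R) :
    HasDirichletGap P {z} R⁻¹ := by
  have hpos (x : V) : 0 < hitExp P x z + 1 := by linarith [hitExp_nonneg (P := P) x z]
  have hR0 : 0 < R := (hpos z).trans_le (hR z)
  refine hP.hasDirichletGap_of_superharmonic hs (h := (hitExp P · z) + 1) hpos fun x hx => ?_
  rw [mulVec_add, hP.mulVec_one, Pi.add_apply (P *ᵥ _), Pi.add_apply, Pi.one_apply,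
    inv_mul_le_iff₀ hR0]
  nlinarith [hR x, hP.hitExp_eq_one_add hs hI (notMem_singleton.1 hx)]

end HittingTimes

section Potentials

variable {V : Type} [Fintype V] [DecidableEq V] {P : Matrix V V ℝ} {ι : Type*} [Fintype ι]

/-- The sum over `i` of the hitting-time functions `x ↦ E_x[T_{b i}]`. Up to sign and an additive
constant it is the potential generated by unit charges at the points `b i`. -/
noncomputable def hitPotential (P : Matrix V V ℝ) (b : ι → V) : V → ℝ :=
  ∑ i, (hitExp P · (b i))

lemma dirichletForm_hitPotential_self (b : ι → V) :
    dirichletForm P (hitPotential P b) (hitPotential P b) =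
      ∑ i, ∑ j, dirichletForm P (hitExp P · (b i)) (hitExp P · (b j)) := by
  simp only [hitPotential, LinearMap.BilinForm.sum_left, LinearMap.BilinForm.sum_right]
  exact sum_comm

lemma IsStoch.dirichletForm_hitPotential (hP : IsStoch P) (hs : P.IsSymm) (hI : Irred P)
    (f : V → ℝ) (b : ι → V) :
    dirichletForm P f (hitPotential P b) =
      Fintype.card ι * ∑ x, f x - Fintype.card V * ∑ i, f (b i) := by
  simp only [hitPotential, LinearMap.BilinForm.sum_right, hP.dirichletForm_hitExp hs hI,
    sum_sub_distrib, sum_const, card_univ, nsmul_eq_mul, mul_sum]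

lemma IsStoch.dirichletForm_hitExp_self_le (hP : IsStoch P) (hs : P.IsSymm) (hI : Irred P)
    (z : V) :
    dirichletForm P (hitExp P · z) (hitExp P · z) ≤ Fintype.card V * maxHit P := by
  rw [hP.dirichletForm_hitExp hs hI, hP.hitExp_self hs hI, mul_zero, sub_zero, ← nsmul_eq_mul]
  exact sum_le_card_nsmul _ _ _ fun x _ => hitExp_le_maxHit x z

/-- Testing `f` against the potential of points where `f` vanishes controls the mean of `f`, and
the Poincaré inequality controls the rest. -/
lemma HasPoincareConst.hasDirichletGap_image [Nonempty ι] {T R : ℝ} (hT : HasPoincareConst P T)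
    (hP : IsStoch P) (hs : P.IsSymm) (hI : Irred P) (b : ι → V) (hR0 : 0 < R)
    (hR : T + dirichletForm P (hitPotential P b) (hitPotential P b) /
      (Fintype.card V * Fintype.card ι ^ 2) ≤ R) :
    HasDirichletGap P (univ.image b) R⁻¹ := by
  intro f hf
  have : Nonempty V := ⟨b (Classical.arbitrary ι)⟩
  have card_V_pos : (0 : ℝ) < Fintype.card V := Nat.cast_pos.2 Fintype.card_pos
  have : (0 : ℝ) < Fintype.card ι := Nat.cast_pos.2 Fintype.card_pos
  have form_nonneg := hP.dirichletForm_self_nonneg hs f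
  set energy := dirichletForm P (hitPotential P b) (hitPotential P b)
  have form_eq : dirichletForm P f (hitPotential P b) = Fintype.card ι * ∑ x, f x := by
    rw [hP.dirichletForm_hitPotential hs hI,
      sum_eq_zero fun i _ => hf (b i) (mem_image_of_mem b (mem_univ i)), mul_zero, sub_zero]
  have mean_le : (∑ x, f x) ^ 2 / Fintype.card V ≤
      energy / (Fintype.card V * Fintype.card ι ^ 2) * dirichletForm P f f := by
    have := hP.dirichletForm_sq_le hs f (hitPotential P b)
    rw [form_eq] at this
    rw [div_mul_eq_mul_div, div_le_div_iff₀ card_V_pos (by positivity)]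
    nlinarith
  rw [inv_mul_le_iff₀ hR0]
  calc f ⬝ᵥ f ≤ T * dirichletForm P f f + (∑ x, f x) ^ 2 / Fintype.card V :=
        hT.dotProduct_self_le hP hs f
    _ ≤ (T + energy / (Fintype.card V * Fintype.card ι ^ 2)) * dirichletForm P f f := by linarith
    _ ≤ R * dirichletForm P f f := mul_le_mul_of_nonneg_right hR form_nonneg

lemma HasPoincareConst.dirichletForm_hitPotential_self_le {T : ℝ} (hT : HasPoincareConst P T)
    (hT0 : 0 ≤ T) (hP : IsStoch P) (hs : P.IsSymm) (hI : Irred P) {b : ι → V}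
    (hb : b.Injective) :
    dirichletForm P (hitPotential P b) (hitPotential P b) ≤
      T * Fintype.card V ^ 2 * Fintype.card ι := by
  set u := hitPotential P b
  rcases (hP.dirichletForm_self_nonneg hs u).eq_or_lt with energy_zero | energy_pos
  · rw [← energy_zero]
    positivity
  have : Nonempty V := by
    by_contra hV
    rw [not_nonempty_iff] at hV
    exact energy_pos.ne' (by rw [Subsingleton.elim u 0, map_zero])
  set g := u - ((∑ x, u x) / Fintype.card V) • 1
  have sum_g : ∑ x, g x = 0 := by simp [g, mul_div_cancel₀]
  have energy_eq : dirichletForm P u u = -(Fintype.card V * ∑ i, g (b i)) := by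
    have := hP.dirichletForm_hitPotential hs hI g b
    rwa [sum_g, mul_zero, zero_sub, LinearMap.BilinForm.sub_left, dirichletForm_comm hs (_ • 1),
      hP.dirichletForm_smul_one_right, sub_zero] at this
  have sum_sq_le : ∑ i, g (b i) ^ 2 ≤ T * dirichletForm P u u := by
    calc ∑ i, g (b i) ^ 2 = ∑ x ∈ univ.map ⟨b, hb⟩, g x ^ 2 :=
          (sum_map univ ⟨b, hb⟩ fun x => g x ^ 2).symm
      _ ≤ ∑ x, g x ^ 2 := sum_le_univ_sum_of_nonneg fun x => sq_nonneg _
      _ = g ⬝ᵥ g := by simp only [dotProduct, ← sq]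
      _ ≤ T * dirichletForm P u u := hT.dotProduct_self_sub_average_le hP hs u
  refine le_of_mul_le_mul_right ?_ energy_pos
  calc dirichletForm P u u * dirichletForm P u u = Fintype.card V ^ 2 * (∑ i, g (b i)) ^ 2 := by
        rw [energy_eq]; ring
    _ ≤ Fintype.card V ^ 2 * (Fintype.card ι * (T * dirichletForm P u u)) := by
        gcongr
        exact (sq_sum_le_card_mul_sum_sq (s := univ)).trans (by rw [card_univ]; gcongr)
    _ = T * Fintype.card V ^ 2 * Fintype.card ι * dirichletForm P u u := by ring

end Potentials

section RandomTuples

open scoped BigOperators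

variable {ι α : Type*} [Fintype ι] [Fintype α] [Nonempty α]

lemma expect_pi_apply [DecidableEq ι] (F : α → ℝ) (i : ι) :
    𝔼 b : ι → α, F (b i) = 𝔼 a, F a := by
  rw [Fintype.expect_equiv (Equiv.funSplitAt i α) (fun b => F (b i)) (fun p => F p.1) fun _ => rfl,
    ← univ_product_univ, expect_product]
  simp only [Fintype.expect_const]

lemma expect_pi_apply₂ [DecidableEq ι] (G : α → α → ℝ) {i j : ι} (hij : j ≠ i) :
    𝔼 b : ι → α, G (b i) (b j) = 𝔼 a, 𝔼 a', G a a' := by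
  rw [Fintype.expect_equiv (Equiv.funSplitAt i α) (fun b => G (b i) (b j))
      (fun p => G p.1 (p.2 ⟨j, hij⟩)) fun _ => rfl,
    ← univ_product_univ, expect_product]
  exact expect_congr rfl fun a _ => expect_pi_apply (G a) _

lemma expect_pi_sum_sum [DecidableEq ι] (G : α → α → ℝ) :
    𝔼 b : ι → α, ∑ i, ∑ j, G (b i) (b j) =
      Fintype.card ι * (𝔼 a, G a a + (Fintype.card ι - 1) * 𝔼 a, 𝔼 a', G a a') := by
  have row (i : ι) : ∑ j, 𝔼 b : ι → α, G (b i) (b j) =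
      𝔼 a, G a a + (Fintype.card ι - 1) * 𝔼 a, 𝔼 a', G a a' := by
    have : Nonempty ι := ⟨i⟩
    rw [← add_sum_erase _ _ (mem_univ i), expect_pi_apply (fun a => G a a),
      sum_congr rfl fun j hj => expect_pi_apply₂ G (ne_of_mem_erase hj), sum_const,
      card_erase_of_mem (mem_univ i), card_univ, nsmul_eq_mul, Nat.cast_sub Fintype.card_pos,
      Nat.cast_one]
  simp only [expect_sum_comm, row, sum_const, card_univ, nsmul_eq_mul]

lemma exists_pi_sum_sum_le (G : α → α → ℝ) :
    ∃ b : ι → α, ∑ i, ∑ j, G (b i) (b j) ≤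
      Fintype.card ι * (𝔼 a, G a a + (Fintype.card ι - 1) * 𝔼 a, 𝔼 a', G a a') := by
  obtain ⟨b, -, hb⟩ := exists_le_of_expect_le univ_nonempty (expect_pi_sum_sum (ι := ι) G).le
  exact ⟨b, hb⟩

end RandomTuples

section Selection

open scoped BigOperators

variable {V : Type} [Fintype V] [DecidableEq V] {P : Matrix V V ℝ} {T : ℝ}

lemma HasPoincareConst.expect_dirichletForm_hitExp_le (hT : HasPoincareConst P T) (hT0 : 0 ≤ T)
    (hP : IsStoch P) (hs : P.IsSymm) (hI : Irred P) {A : Finset V} (hA : A.Nonempty) :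
    𝔼 x : A, 𝔼 y : A, dirichletForm P (hitExp P · x) (hitExp P · y) ≤
      T * Fintype.card V ^ 2 / #A := by
  have : (0 : ℝ) < #A := Nat.cast_pos.2 hA.card_pos
  calc 𝔼 x : A, 𝔼 y : A, dirichletForm P (hitExp P · x) (hitExp P · y)
      = dirichletForm P (hitPotential P ((↑) : A → V)) (hitPotential P ((↑) : A → V)) /
          #A ^ 2 := by
        simp only [Fintype.expect_eq_sum_div_card, dirichletForm_hitPotential_self, ← sum_div,
          div_div, Fintype.card_coe, sq]
    _ ≤ T * Fintype.card V ^ 2 * #A / #A ^ 2 := by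
        gcongr
        simpa only [Fintype.card_coe] using
          hT.dirichletForm_hitPotential_self_le hT0 hP hs hI (Subtype.val_injective (p := (· ∈ A)))
    _ = T * Fintype.card V ^ 2 / #A := by field_simp

/-- The average over uniformly random tuples from `A`: the diagonal pairs cost `|V| H` each, while
off the diagonal the average pair costs only `T |V|² / |A|`. -/
lemma HasPoincareConst.exists_hitPotential_le (hT : HasPoincareConst P T) (hT0 : 0 ≤ T)
    (hP : IsStoch P) (hs : P.IsSymm) (hI : Irred P) {A : Finset V} (hA : A.Nonempty) {k : ℕ}
    (hk : 1 ≤ k) :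
    ∃ b : Fin k → V, (∀ i, b i ∈ A) ∧
      dirichletForm P (hitPotential P b) (hitPotential P b) ≤
        k * (Fintype.card V * maxHit P + (k - 1) * (T * Fintype.card V ^ 2 / #A)) := by
  have : Nonempty A := hA.to_subtype
  have k_sub_one_nonneg : (0 : ℝ) ≤ k - 1 := sub_nonneg.2 (Nat.one_le_cast.2 hk)
  obtain ⟨b, hb⟩ := exists_pi_sum_sum_le (ι := Fin k)
    fun x y : A => dirichletForm P (hitExp P · x) (hitExp P · y)
  rw [Fintype.card_fin] at hb
  refine ⟨fun i => b i, fun i => (b i).2, ?_⟩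
  rw [dirichletForm_hitPotential_self]
  refine hb.trans ?_
  gcongr
  · exact expect_le univ_nonempty fun x _ => hP.dirichletForm_hitExp_self_le hs hI x
  · exact hT.expect_dirichletForm_hitExp_le hT0 hP hs hI hA

lemma HasPoincareConst.exists_hitPotential_le_of_mul_le (hT : HasPoincareConst P T) (hT0 : 0 ≤ T)
    (hP : IsStoch P) (hs : P.IsSymm) (hI : Irred P) {c : ℝ} (hH : maxHit P ≤ c * Fintype.card V)
    {A : Finset V} (hA : A.Nonempty) {k : ℕ} (hk : 1 ≤ k) (hkA : (k - 1) * T ≤ #A) :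
    ∃ b : Fin k → V, (∀ i, b i ∈ A) ∧
      dirichletForm P (hitPotential P b) (hitPotential P b) ≤
        k * ((c + 1) * (Fintype.card V : ℝ) ^ 2) := by
  obtain ⟨b, hbA, hb⟩ := hT.exists_hitPotential_le hT0 hP hs hI hA hk
  refine ⟨b, hbA, hb.trans ?_⟩
  have card_A_pos : (0 : ℝ) < #A := Nat.cast_pos.2 hA.card_pos
  have off_diagonal_le : (k - 1) * (T * (Fintype.card V : ℝ) ^ 2 / #A) ≤ Fintype.card V ^ 2 := by
    rw [← mul_div_assoc, ← mul_assoc, mul_div_right_comm]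
    exact mul_le_of_le_one_left (by positivity) ((div_le_one card_A_pos).2 hkA)
  have diagonal_le : Fintype.card V * maxHit P ≤ Fintype.card V * (c * Fintype.card V) := by
    gcongr
  gcongr
  linarith

lemma HasPoincareConst.exists_hasDirichletGap_image_of_mul_le (hT : HasPoincareConst P T)
    (hT0 : 0 ≤ T) (hP : IsStoch P) (hs : P.IsSymm) (hI : Irred P) {c : ℝ} (hc : 1 ≤ c)
    (hH : maxHit P ≤ c * Fintype.card V) {A : Finset V} (hA : A.Nonempty) (hTA : T ≤ #A) {k : ℕ}
    (hk : 1 ≤ k) (hkA : (k - 1) * T ≤ #A) :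
    ∃ b : Fin k → V, (∀ i, b i ∈ A) ∧
      HasDirichletGap P (univ.image b) (4 * c * Fintype.card V / k)⁻¹ := by
  obtain ⟨b, hbA, hb⟩ := hT.exists_hitPotential_le_of_mul_le hT0 hP hs hI hH hA hk hkA
  have : NeZero k := ⟨Nat.ne_zero_of_lt hk⟩
  have : Nonempty V := ⟨b 0⟩
  have k_pos : (0 : ℝ) < k := Nat.cast_pos.2 hk
  have : (0 : ℝ) < Fintype.card V := Nat.cast_pos.2 Fintype.card_pos
  have card_A_le : (#A : ℝ) ≤ Fintype.card V := Nat.cast_le.2 (card_le_univ A)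
  refine ⟨b, hbA, hT.hasDirichletGap_image hP hs hI b (by positivity) ?_⟩
  rw [Fintype.card_fin]
  have T_le : T ≤ 2 * Fintype.card V / k := by
    rw [le_div_iff₀ k_pos]
    linarith
  calc T + dirichletForm P (hitPotential P b) (hitPotential P b) / (Fintype.card V * k ^ 2)
      ≤ 2 * Fintype.card V / k +
          k * ((c + 1) * (Fintype.card V : ℝ) ^ 2) / (Fintype.card V * k ^ 2) := by gcongr
    _ = (c + 3) * Fintype.card V / k := by field_simp; ring
    _ ≤ 4 * c * Fintype.card V / k := by gcongr; linarith

/-- With about `|A| / T` points the diagonal and off-diagonal parts of the energy balance. Below one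
point per `T`, a single point already has the required gap by the hitting-time bound. -/
lemma HasPoincareConst.exists_hasDirichletGap_image (hT : HasPoincareConst P T) (hT0 : 0 < T)
    (hP : IsStoch P) (hs : P.IsSymm) (hI : Irred P) {c : ℝ} (hc : 1 ≤ c)
    (hH : maxHit P ≤ c * Fintype.card V) {A : Finset V} (hA : A.Nonempty) :
    ∃ b : Fin (⌊#A / T⌋₊ + 1) → V, (∀ i, b i ∈ A) ∧
      HasDirichletGap P (univ.image b) (4 * c * Fintype.card V / (⌊#A / T⌋₊ + 1 : ℕ))⁻¹ := by
  rcases lt_or_ge (#A : ℝ) T with card_lt | le_card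
  · obtain ⟨z, hz⟩ := hA
    have : Nonempty V := ⟨z⟩
    have one_le_card : (1 : ℝ) ≤ Fintype.card V := Nat.one_le_cast.2 Fintype.card_pos
    rw [Nat.floor_eq_zero.2 ((div_lt_one hT0).2 card_lt), zero_add, Nat.cast_one, div_one]
    refine ⟨fun _ => z, fun _ => hz, ?_⟩
    rw [image_const univ_nonempty]
    refine hP.hasDirichletGap_singleton_of_hitExp_le hs hI fun x => ?_
    nlinarith [hitExp_le_maxHit (P := P) x z]
  · have floor_mul_le : (⌊#A / T⌋₊ : ℝ) * T ≤ #A :=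
      (le_div_iff₀ hT0).1 (Nat.floor_le (by positivity))
    exact hT.exists_hasDirichletGap_image_of_mul_le hT0.le hP hs hI hc hH hA le_card
      (Nat.le_add_left 1 _) (by rwa [Nat.cast_succ, add_sub_cancel_right])

end Selection

section Paths

variable {V : Type} [Fintype V] {P : Matrix V V ℝ} {μ : V → ℝ} {m : ℕ}

lemma IsStoch.pathProb_nonneg (hP : IsStoch P) (hμ : ∀ x, 0 ≤ μ x) (ω : Fin (m + 1) → V) :
    0 ≤ pathProb P μ ω :=
  mul_nonneg (hμ _) (prod_nonneg fun _ _ => hP.1 _ _)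

lemma IsStoch.sum_pathProb (hP : IsStoch P) (hμ1 : ∑ x, μ x = 1) :
    ∑ ω : Fin (m + 1) → V, pathProb P μ ω = 1 := by
  simpa [prPath, hP.survProb_empty, dotProduct_one, hμ1] using prPath_avoid P ∅ m μ

lemma IsStoch.prPath_le_one (hP : IsStoch P) (hμ : ∀ x, 0 ≤ μ x) (hμ1 : ∑ x, μ x = 1)
    (E : (Fin (m + 1) → V) → Prop) : prPath P μ m E ≤ 1 := by
  rw [prPath, ← sum_filter, ← hP.sum_pathProb hμ1]
  exact sum_le_univ_sum_of_nonneg (hP.pathProb_nonneg hμ)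

lemma IsStoch.prPath_le_sum (hP : IsStoch P) (hμ : ∀ x, 0 ≤ μ x) {β : Type*} {s : Finset β}
    {E : (Fin (m + 1) → V) → Prop} {F : β → (Fin (m + 1) → V) → Prop}
    (hEF : ∀ ω, E ω → ∃ b ∈ s, F b ω) :
    prPath P μ m E ≤ ∑ b ∈ s, prPath P μ m (F b) := by
  simp only [prPath]
  rw [sum_comm]
  have term_nonneg (ω : Fin (m + 1) → V) (b : β) : 0 ≤ if F b ω then pathProb P μ ω else 0 :=
    ite_nonneg (hP.pathProb_nonneg hμ ω) le_rfl
  refine sum_le_sum fun ω _ => ?_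
  split_ifs with hω
  · obtain ⟨b, hbs, hb⟩ := hEF ω hω
    simpa only [if_pos hb] using single_le_sum (fun b _ => term_nonneg ω b) hbs
  · exact sum_nonneg fun b _ => term_nonneg ω b

lemma expPath_comp_eq_sum_prPath (N : ℕ) (S : (Fin (m + 1) → V) → ℕ) (hS : ∀ ω, S ω ≤ N)
    (F : ℕ → ℝ) :
    expPath P μ m (fun ω => F (S ω)) =
      ∑ s ∈ range (N + 1), F s * prPath P μ m (fun ω => S ω = s) := by
  simp only [expPath, prPath, mul_sum, mul_ite, mul_zero]
  rw [sum_comm]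
  refine sum_congr rfl fun ω _ => ?_
  rw [sum_ite_eq, if_pos (mem_range_succ_iff.2 (hS ω)), mul_comm]

end Paths

section Unvisited

variable {V : Type} [Fintype V] [DecidableEq V] {P : Matrix V V ℝ} {μ : V → ℝ} {t : ℕ}

lemma mem_unvisited {ω : Fin (t + 1) → V} {x : V} : x ∈ unvisited ω ↔ ∀ i, ω i ≠ x := by
  simp [unvisited]

lemma IsStoch.prPath_card_unvisited_eq_le (hP : IsStoch P) (hs : P.IsSymm) (hμ : ∀ x, 0 ≤ μ x)
    (hμ1 : ∑ x, μ x = 1) {s k : ℕ} {lam : ℝ}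
    (hgap : ∀ A : Finset V, #A = s →
      ∃ b : Fin k → V, (∀ i, b i ∈ A) ∧ HasDirichletGap P (univ.image b) lam) :
    prPath P μ t (fun ω => #(unvisited ω) = s) ≤
      Fintype.card V ^ k * (Fintype.card V * Real.exp (-(t * lam))) := by
  set gapTuples : Finset (Fin k → V) := {b | HasDirichletGap P (univ.image b) lam}
  have exists_avoided (ω : Fin (t + 1) → V) (hω : #(unvisited ω) = s) :
      ∃ b ∈ gapTuples, ∀ i, ω i ∉ univ.image b := by
    obtain ⟨b, hbA, hb⟩ := hgap (unvisited ω) hω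
    refine ⟨b, mem_filter.2 ⟨mem_univ b, hb⟩, fun i hi => ?_⟩
    obtain ⟨j, -, hj⟩ := mem_image.1 hi
    exact mem_unvisited.1 (hbA j) i hj.symm
  have card_le : (#gapTuples : ℝ) ≤ Fintype.card V ^ k := by
    have := card_le_univ gapTuples
    rw [Fintype.card_fun, Fintype.card_fin] at this
    exact_mod_cast this
  calc prPath P μ t (fun ω => #(unvisited ω) = s)
      ≤ ∑ b ∈ gapTuples, prPath P μ t (fun ω => ∀ i, ω i ∉ univ.image b) :=
        hP.prPath_le_sum hμ exists_avoided
    _ ≤ #gapTuples • (Fintype.card V * Real.exp (-(t * lam))) :=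
        sum_le_card_nsmul _ _ _ fun b hb =>
          (mem_filter.1 hb).2.prPath_avoid_le hP hs hμ hμ1 t
    _ ≤ Fintype.card V ^ k * (Fintype.card V * Real.exp (-(t * lam))) := by
        rw [nsmul_eq_mul]
        gcongr

lemma IsStoch.expPath_pow_card_unvisited_le (hP : IsStoch P) (hs : P.IsSymm) (hμ : ∀ x, 0 ≤ μ x)
    (hμ1 : ∑ x, μ x = 1) {θ : ℝ} (hθ : 0 ≤ θ) {k : ℕ → ℕ} {lam : ℕ → ℝ}
    (hgap : ∀ A : Finset V, A.Nonempty →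
      ∃ b : Fin (k #A) → V, (∀ i, b i ∈ A) ∧ HasDirichletGap P (univ.image b) (lam #A)) :
    expPath P μ t (fun ω => θ ^ #(unvisited ω)) ≤
      1 + ∑ s ∈ range (Fintype.card V), θ ^ (s + 1) *
        (Fintype.card V ^ k (s + 1) * (Fintype.card V * Real.exp (-(t * lam (s + 1))))) := by
  rw [expPath_comp_eq_sum_prPath (Fintype.card V) (fun ω => #(unvisited ω))
    (fun ω => card_le_univ _) (θ ^ ·), sum_range_succ', add_comm, pow_zero, one_mul]
  gcongr with s
  · exact hP.prPath_le_one hμ hμ1 _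
  · exact hP.prPath_card_unvisited_eq_le hs hμ hμ1 fun A hA =>
      hA ▸ hgap A (card_pos.1 (hA ▸ s.succ_pos))

lemma pow_eq_one_or_self_of_mul_self_eq_one {M : Type*} [Monoid M] {a : M} (ha : a * a = 1)
    (m : ℕ) : a ^ m = 1 ∨ a ^ m = a := by
  rcases m.even_or_odd' with ⟨r, rfl | rfl⟩
  · exact Or.inl (by rw [pow_mul, sq, ha, one_pow])
  · exact Or.inr (by rw [pow_succ, pow_mul, sq, ha, one_pow, one_mul])

lemma IsStoch.unvisited_eq_empty_of_mul_self_eq_one (hP : IsStoch P) (hI : Irred P)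
    (hPP : P * P = 1) (ht : 1 ≤ t) {ω : Fin (t + 1) → V} (hω : pathProb P μ ω ≠ 0) :
    unvisited ω = ∅ := by
  obtain ⟨t, rfl⟩ := Nat.exists_eq_add_of_le' ht
  refine eq_empty_of_forall_notMem fun x hx => ?_
  rw [mem_unvisited] at hx
  have first_step_pos : 0 < P (ω 0) (ω 1) := by
    refine (hP.1 _ _).lt_of_ne' ?_
    simpa using prod_ne_zero_iff.1 (right_ne_zero_of_mul hω) 0 (mem_univ _)
  have step_from_x_pos : 0 < P x (ω 0) := by
    obtain ⟨m, hm⟩ := hI x (ω 0)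
    rcases pow_eq_one_or_self_of_mul_self_eq_one hPP m with h | h
    · exact absurd hm (by simp [h, one_apply_ne (hx 0).symm])
    · rwa [h] at hm
  have two_steps_pos : 0 < (P * P) x (ω 1) :=
    sum_pos' (fun z _ => mul_nonneg (hP.1 _ _) (hP.1 _ _))
      ⟨ω 0, mem_univ _, mul_pos step_from_x_pos first_step_pos⟩
  rw [hPP, one_apply_ne (hx 1).symm] at two_steps_pos
  exact two_steps_pos.false

lemma IsStoch.expPath_pow_card_unvisited_eq_one (hP : IsStoch P) (hI : Irred P)
    (hPP : P * P = 1) (hμ1 : ∑ x, μ x = 1) (ht : Fintype.card V ≤ 1 ∨ 1 ≤ t) (θ : ℝ) :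
    expPath P μ t (fun ω => θ ^ #(unvisited ω)) = 1 := by
  have unvisited_eq (ω : Fin (t + 1) → V) (hω : pathProb P μ ω ≠ 0) : unvisited ω = ∅ := by
    rcases ht with hV | ht
    · exact eq_empty_of_forall_notMem fun x hx =>
        mem_unvisited.1 hx 0 (Fintype.card_le_one_iff.1 hV _ _)
    · exact hP.unvisited_eq_empty_of_mul_self_eq_one hI hPP ht hω
  rw [expPath, ← hP.sum_pathProb (m := t) hμ1]
  refine sum_congr rfl fun ω _ => ?_
  by_cases hω : pathProb P μ ω = 0
  · rw [hω, zero_mul]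
  · rw [unvisited_eq ω hω, card_empty, pow_zero, mul_one]

end Unvisited

section Summation

variable {n T c θ a b t : ℝ} {s k : ℕ}

lemma union_bound_exponent_le {L N : ℝ} (hL : 0 ≤ L) (hN : 0 ≤ N) (hn : 0 < n) (hT : 0 ≤ T)
    (hc : 0 < c) (ha : 0 ≤ a) (hb : 0 ≤ b) (hk : 1 ≤ k) (hks : s ≤ k * T)
    (ht : 2 * 16 * c * (1 + a) * n * T * L + 16 * c * (1 + b) * n * N ≤ t) :
    s * L + (k * N + (N - t * (4 * c * n / k)⁻¹)) ≤
      s * -(3 * L) + (L * (-(1 + 2 * a) * T) + N * -b) := by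
  have one_le_k : (1 : ℝ) ≤ k := Nat.one_le_cast.2 hk
  have decay : k * (8 * (1 + a) * (T * L) + 4 * (1 + b) * N) ≤ t * (4 * c * n / k)⁻¹ := by
    rw [inv_div, ← mul_div_assoc, le_div_iff₀ (by positivity)]
    nlinarith
  have size_le : s * L ≤ k * (T * L) := by
    rw [← mul_assoc]
    gcongr
  have relaxation_le : (1 + 2 * a) * (T * L) ≤ k * ((1 + 2 * a) * (T * L)) :=
    le_mul_of_one_le_left (by positivity) one_le_k
  have entropy_le : (1 + b) * N ≤ k * ((1 + b) * N) :=
    le_mul_of_one_le_left (by positivity) one_le_k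
  have slack_L : 0 ≤ k * ((3 + 6 * a) * (T * L)) := by positivity
  have slack_N : 0 ≤ k * ((2 + 3 * b) * N) := by positivity
  linarith

lemma union_bound_term_le (hn : 1 ≤ n) (hT : 0 ≤ T) (hc : 0 < c) (hθ : 2 ≤ θ) (ha : 0 ≤ a)
    (hb : 0 ≤ b) (hk : 1 ≤ k) (hks : s ≤ k * T)
    (ht : 2 * 16 * c * (1 + a) * n * T * Real.log θ + 16 * c * (1 + b) * n * Real.log n ≤ t) :
    θ ^ s * (n ^ k * (n * Real.exp (-(t * (4 * c * n / k)⁻¹)))) ≤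
      (1 / 8) ^ s * (θ ^ (-(1 + 2 * a) * T) * n ^ (-b)) := by
  have n_pos : 0 < n := by linarith
  have θ_pos : 0 < θ := by linarith
  have exp_neg_le : Real.exp (-(3 * Real.log θ)) ≤ 1 / 8 := by
    have : Real.exp (3 * Real.log θ) = θ ^ 3 := by
      rw [mul_comm, Real.exp_mul, Real.exp_log θ_pos]
      norm_cast
    rw [Real.exp_neg, this, one_div]
    gcongr
    calc (8 : ℝ) = 2 ^ 3 := by norm_num
      _ ≤ θ ^ 3 := by gcongr
  calc θ ^ s * (n ^ k * (n * Real.exp (-(t * (4 * c * n / k)⁻¹))))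
      = Real.exp (s * Real.log θ + (k * Real.log n +
          (Real.log n - t * (4 * c * n / k)⁻¹))) := by
        rw [Real.exp_add, Real.exp_add, sub_eq_add_neg, Real.exp_add, Real.exp_nat_mul,
          Real.exp_nat_mul, Real.exp_log θ_pos, Real.exp_log n_pos]
    _ ≤ Real.exp (s * -(3 * Real.log θ) +
          (Real.log θ * (-(1 + 2 * a) * T) + Real.log n * -b)) :=
        Real.exp_le_exp.2 (union_bound_exponent_le (Real.log_nonneg (by linarith))
          (Real.log_nonneg hn) n_pos hT hc ha hb hk hks ht)
    _ = Real.exp (-(3 * Real.log θ)) ^ s * (θ ^ (-(1 + 2 * a) * T) * n ^ (-b)) := by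
        rw [Real.exp_add, Real.exp_add, Real.exp_nat_mul, Real.rpow_def_of_pos θ_pos,
          Real.rpow_def_of_pos n_pos]
    _ ≤ (1 / 8) ^ s * (θ ^ (-(1 + 2 * a) * T) * n ^ (-b)) := by gcongr

lemma sum_range_inv_eight_pow_succ_le (m : ℕ) :
    ∑ s ∈ range m, (1 / 8 : ℝ) ^ (s + 1) ≤ 1 / 7 := by
  simp only [pow_succ]
  rw [← sum_mul, geom_sum_eq (by norm_num)]
  calc ((1 / 8 : ℝ) ^ m - 1) / (1 / 8 - 1) * (1 / 8) = (1 - (1 / 8) ^ m) / 7 := by ring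
    _ ≤ 1 / 7 := by gcongr; exact sub_le_self 1 (by positivity)

end Summation

section Main

variable {V : Type} [Fintype V] [DecidableEq V] [Nonempty V] {P : Matrix V V ℝ} {μ : V → ℝ}
  {T c θ a b : ℝ} {t : ℕ}

lemma HasPoincareConst.expPath_pow_card_unvisited_le (hT : HasPoincareConst P T) (hT0 : 0 < T)
    (hP : IsStoch P) (hs : P.IsSymm) (hI : Irred P) (hμ : ∀ x, 0 ≤ μ x) (hμ1 : ∑ x, μ x = 1)
    (hc : 1 ≤ c) (hH : maxHit P ≤ c * Fintype.card V) (hθ : 2 ≤ θ) (ha : 0 ≤ a) (hb : 0 ≤ b)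
    (ht : 2 * 16 * c * (1 + a) * Fintype.card V * T * Real.log θ +
      16 * c * (1 + b) * Fintype.card V * Real.log (Fintype.card V) ≤ t) :
    expPath P μ t (fun ω => θ ^ #(unvisited ω)) ≤
      1 + 1 / 7 * (θ ^ (-(1 + 2 * a) * T) * (Fintype.card V : ℝ) ^ (-b)) := by
  have one_le_card : (1 : ℝ) ≤ Fintype.card V := Nat.one_le_cast.2 Fintype.card_pos
  refine (hP.expPath_pow_card_unvisited_le hs hμ hμ1 (k := fun s => ⌊s / T⌋₊ + 1)
    (lam := fun s => (4 * c * Fintype.card V / (⌊s / T⌋₊ + 1 : ℕ))⁻¹) (by linarith)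
    fun A hA => hT.exists_hasDirichletGap_image hT0 hP hs hI hc hH hA).trans ?_
  have term_le (s : ℕ) := union_bound_term_le (s := s) one_le_card hT0.le
    (zero_lt_one.trans_le hc) hθ ha hb (Nat.le_add_left 1 ⌊s / T⌋₊)
    (by exact_mod_cast ((div_lt_iff₀ hT0).1 (Nat.lt_floor_add_one (s / T))).le) ht
  gcongr
  refine (sum_le_sum fun s _ => term_le (s + 1)).trans ?_
  rw [← sum_mul]
  gcongr
  exact sum_range_inv_eight_pow_succ_le _

/-- If `P * P = 1` then every eigenvalue is `±1` and `Trel P = 0` by the convention `1 / 0 = 0`, so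
there is no Poincaré inequality; but then the chain alternates between at most two states. -/
theorem key_theorem_general (hP : IsStoch P) (hs : P.IsSymm) (hI : Irred P) (hμ : ∀ x, 0 ≤ μ x)
    (hμ1 : ∑ x, μ x = 1) (hc : 1 ≤ c) (hH : maxHit P ≤ c * Fintype.card V) (hθ : 2 ≤ θ)
    (ha : 0 ≤ a) (hb : 0 ≤ b)
    (ht : 2 * 16 * c * (1 + a) * Fintype.card V * Trel P * Real.log θ +
      16 * c * (1 + b) * Fintype.card V * Real.log (Fintype.card V) ≤ t) :
    expPath P μ t (fun ω => θ ^ #(unvisited ω)) ≤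
      1 + 1 / 7 * (θ ^ (-(1 + 2 * a) * Trel P) * (Fintype.card V : ℝ) ^ (-b)) := by
  by_cases hPP : P * P = 1
  · have t_pos (hV : 1 < Fintype.card V) : 1 ≤ t := by
      have := hP.Trel_nonneg hs
      have := Real.log_nonneg (by linarith : 1 ≤ θ)
      have := Real.log_pos (Nat.one_lt_cast.2 hV : (1 : ℝ) < Fintype.card V)
      have : (0 : ℝ) < t := ht.trans_lt' (by positivity)
      exact_mod_cast this
    rw [hP.expPath_pow_card_unvisited_eq_one hI hPP hμ1 ((le_or_gt _ 1).imp_right t_pos) θ]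
    exact le_add_of_nonneg_right (by positivity)
  · exact (hP.hasPoincareConst_Trel hs hI hPP).expPath_pow_card_unvisited_le
      (zero_lt_one.trans_le (hP.one_le_Trel hs hPP)) hP hs hI hμ hμ1 hc hH hθ ha hb ht

lemma IsStoch.rpow_Trel_mul_rpow_card_le_one (hP : IsStoch P) (hs : P.IsSymm) (hθ : 1 ≤ θ)
    (ha : 0 ≤ a) (hb : 0 ≤ b) :
    θ ^ (-(1 + 2 * a) * Trel P) * (Fintype.card V : ℝ) ^ (-b) ≤ 1 := by
  have Trel_nonneg := hP.Trel_nonneg hs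
  refine mul_le_one₀ (Real.rpow_le_one_of_one_le_of_nonpos hθ ?_) (by positivity)
    (Real.rpow_le_one_of_one_le_of_nonpos (Nat.one_le_cast.2 Fintype.card_pos) (by linarith))
  rw [neg_mul]
  exact neg_nonpos.2 (by positivity)

end Main

/-- The key theorem: bound on `E[θ^{|S_t|}]` for a reversible chain
with uniform stationary distribution, initial distribution `μ ≥ π/2`, and maximal
hitting time `H ≤ c₁ |X|`. -/
theorem key_theorem :
    ∃ c : ℝ, 0 < c ∧
      ∀ (X : Type) [Fintype X] [DecidableEq X] [Nonempty X]
        (P : Matrix X X ℝ) (μ : X → ℝ) (c₁ θ : ℝ),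
        IsStoch P → (∀ x y, P x y = P y x) → Irred P →
        (∀ x, 0 ≤ μ x) → (∑ x, μ x) = 1 →
        (∀ x, (Fintype.card X : ℝ)⁻¹ / 2 ≤ μ x) →
        1 ≤ c₁ → maxHit P ≤ c₁ * (Fintype.card X : ℝ) →
        2 ≤ θ →
        (∀ a b : ℝ, 0 < a → 0 < b → ∀ t : ℕ,
            2 * c * c₁ ^ 2 * (1 + a) * (Fintype.card X : ℝ) * Trel P * Real.log θ +
              c * c₁ ^ 2 * (1 + b) * (Fintype.card X : ℝ) * Real.log (Fintype.card X)
                ≤ (t : ℝ) →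
            expPath P μ t (fun ω => θ ^ (unvisited ω).card) ≤
              1 + (θ ^ (-(1 + 2 * a) * Trel P) * (Fintype.card X : ℝ) ^ (-b)) +
                (θ ^ (-(1 + 2 * a) * Trel P) * (Fintype.card X : ℝ) ^ (-b)) ^ 2 +
                (θ ^ (-(1 + 2 * a) * Trel P) * (Fintype.card X : ℝ) ^ (-b)) ^ 9) ∧
        (∀ t : ℕ,
            2 * c * c₁ ^ 2 * (1 + 1) * (Fintype.card X : ℝ) * Trel P * Real.log θ +
              c * c₁ ^ 2 * (1 + 1) * (Fintype.card X : ℝ) * Real.log (Fintype.card X)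
                ≤ (t : ℝ) →
            expPath P μ t (fun ω => θ ^ (unvisited ω).card) < 1.21) := by
  refine ⟨16, by norm_num, fun X _ _ _ P μ c₁ θ hP hs hI hμ hμ1 _ hc hH hθ => ?_⟩
  replace hs : P.IsSymm := Matrix.IsSymm.ext fun x y => hs y x
  have hH_sq : maxHit P ≤ c₁ ^ 2 * Fintype.card X :=
    hH.trans (by gcongr; exact le_self_pow₀ hc two_ne_zero)
  have general {a b : ℝ} (ha : 0 ≤ a) (hb : 0 ≤ b) {t : ℕ} :=
    key_theorem_general (t := t) hP hs hI hμ hμ1 (one_le_pow₀ hc) hH_sq hθ ha hb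
  refine ⟨fun a b ha hb t ht => (general ha.le hb.le ht).trans ?_, fun t ht => ?_⟩
  · have δ_nonneg : 0 ≤ θ ^ (-(1 + 2 * a) * Trel P) * (Fintype.card X : ℝ) ^ (-b) := by positivity
    linarith [pow_nonneg δ_nonneg 2, pow_nonneg δ_nonneg 9]
  · calc expPath P μ t (fun ω => θ ^ (unvisited ω).card)
        ≤ 1 + 1 / 7 * (θ ^ (-(1 + 2 * 1) * Trel P) * (Fintype.card X : ℝ) ^ (-1 : ℝ)) :=
          general zero_le_one zero_le_one ht
      _ ≤ 1 + 1 / 7 * 1 := by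
          gcongr
          exact hP.rpow_Trel_mul_rpow_card_le_one hs (by linarith) zero_le_one zero_le_one
      _ < 1.21 := by norm_num

end Paper
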